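/- Fix q ∈ (0,1) and a positive integer L. Then lim_{n→∞} 𝒫_n^q(S(n, n−L)) = (1−q) q^{L−1} L, where the strategy S(n, n−L) is considered for all n > L. -/

import Mathlib

open Finset Filter

/-- The number of inversions of a permutation of `Fin n`. -/
def invCount (n : ℕ) (σ : Equiv.Perm (Fin n)) : ℕ :=
  (Finset.univ.filter (fun p : Fin n × Fin n => p.1 < p.2 ∧ σ p.2 < σ p.1)).card

/-- Normalization constant of the Mallows distribution:
`Z_n(q) = ∑_{σ ∈ S_n} q^{inv σ}`. -/
noncomputable def mallowsZ (n : ℕ) (q : ℝ) : ℝ :=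
  ∑ σ : Equiv.Perm (Fin n), q ^ invCount n σ

/-- The Mallows probability of a set `A` of permutations:
`P_n^q(A) = (∑_{σ ∈ A} q^{inv σ}) / Z_n(q)`. -/
noncomputable def mallowsProb (n : ℕ) (q : ℝ) (A : Finset (Equiv.Perm (Fin n))) : ℝ :=
  (∑ σ ∈ A, q ^ invCount n σ) / mallowsZ n q

/-- The success event for the strategy `S(n,M)`.  Positions are indexed by `Fin n`
(the index `i : Fin n` represents the `(i+1)`-st arriving item) and ranks are the
values of `σ` (the value `n-1`, i.e. the top of `Fin n`, represents the highest
rank `n`).  For `M ≥ 1` the strategy succeeds iff for some position `j` with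
`(j:ℕ) ≥ M` (i.e. item number `j+1 ≥ M+1`) the item at position `j` has the top
rank and the maximum rank among the items strictly before position `j` equals the
maximum rank among the first `M` items.  For `M = 0` it succeeds iff the first
item has top rank. -/
def winEvent (n M : ℕ) : Finset (Equiv.Perm (Fin n)) :=
  if M = 0 then
    Finset.univ.filter (fun σ => ∀ i : Fin n, (i : ℕ) = 0 → (σ i : ℕ) = n - 1)
  else
    Finset.univ.filter (fun σ => ∃ j : Fin n, M ≤ (j : ℕ) ∧ (σ j : ℕ) = n - 1 ∧
      (Finset.univ.filter (fun i : Fin n => i < j)).sup (fun i => (σ i : ℕ)) =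
      (Finset.univ.filter (fun i : Fin n => (i : ℕ) < M)).sup (fun i => (σ i : ℕ)))

/-- `𝒫_n^q(S(n,M))`, the success probability of the strategy `S(n,M)` under the
Mallows distribution with parameter `q`. -/
noncomputable def succProb (n M : ℕ) (q : ℝ) : ℝ := mallowsProb n q (winEvent n M)

/-- Insert the value `r` at the last position. -/
def insLast (n : ℕ) (p : Fin (n+1) × Equiv.Perm (Fin n)) : Equiv.Perm (Fin (n+1)) :=
  ((finSuccEquiv' (Fin.last n)).trans (Equiv.optionCongr p.2)).trans (finSuccEquiv' p.1).symm

theorem insLast_last (n : ℕ) (r : Fin (n+1)) (τ : Equiv.Perm (Fin n)) :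
    insLast n (r, τ) (Fin.last n) = r := by
  simp [insLast]

theorem insLast_castSucc (n : ℕ) (r : Fin (n+1)) (τ : Equiv.Perm (Fin n)) (i : Fin n) :
    insLast n (r, τ) i.castSucc = r.succAbove (τ i) := by
  simp [insLast, finSuccEquiv'_last_apply_castSucc]

theorem insLast_bij (n : ℕ) : Function.Bijective (insLast n) := by
  rw [Fintype.bijective_iff_injective_and_card]
  refine ⟨?_, ?_⟩
  · rintro ⟨r, τ⟩ ⟨r', τ'⟩ h
    have h1 : r = r' := by rw [← insLast_last n r τ, h, insLast_last]
    subst h1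
    have h2 : τ = τ' := by
      ext i
      have := congrArg (fun σ => σ i.castSucc) h
      simp only [insLast_castSucc] at this
      rw [Fin.succAbove_right_injective this]
    rw [h2]
  · simp [Fintype.card_perm, Nat.factorial_succ]

theorem invCount_eq (n : ℕ) (σ : Equiv.Perm (Fin n)) :
    invCount n σ = ∑ j : Fin n, ∑ i : Fin n, if i < j ∧ σ j < σ i then 1 else 0 := by
  rw [invCount, Finset.card_filter, Fintype.sum_prod_type, Finset.sum_comm]

theorem count_above (n : ℕ) (r : Fin (n+1)) :
    (∑ k : Fin n, if r < r.succAbove k then 1 else 0) = n - (r : ℕ) := by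
  have h : ∀ k : Fin n, (r < r.succAbove k) ↔ ¬ ((k : ℕ) < r) := by
    intro k
    rw [Fin.lt_succAbove_iff_le_castSucc, Fin.le_def]
    simp
  simp_rw [h]
  rw [Fin.sum_univ_eq_sum_range (fun k => if ¬ (k < (r:ℕ)) then 1 else 0) n, ← Finset.card_filter]
  have : (Finset.range n).filter (fun k => ¬ (k < (r:ℕ))) = Finset.Ico (r:ℕ) n := by
    ext k; simp; omega
  rw [this, Nat.card_Ico]

theorem invCount_insLast (n : ℕ) (r : Fin (n+1)) (τ : Equiv.Perm (Fin n)) :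
    invCount (n+1) (insLast n (r, τ)) = invCount n τ + (n - (r : ℕ)) := by
  rw [invCount_eq, invCount_eq, Fin.sum_univ_castSucc]
  congr 1
  · refine Finset.sum_congr rfl fun j _ => ?_
    rw [Fin.sum_univ_castSucc]
    have h0 : ¬ (Fin.last n < j.castSucc) := by simp [Fin.le_last]
    simp only [h0, false_and, if_false, add_zero, insLast_castSucc, Fin.castSucc_lt_castSucc_iff,
      Fin.succAbove_lt_succAbove_iff]
  · rw [Fin.sum_univ_castSucc]
    simp only [insLast_last, insLast_castSucc, Fin.castSucc_lt_last, true_and, lt_irrefl,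
      false_and, if_false, add_zero]
    rw [Equiv.sum_comp τ (fun k => if r < r.succAbove k then 1 else 0), count_above]

/-- Position `j` is a record. -/
def isRec (n : ℕ) (σ : Equiv.Perm (Fin n)) (j : Fin n) : Prop := ∀ i, i < j → σ i < σ j

open Classical in
/-- Number of records at positions at least `M`. -/
noncomputable def recCount (n M : ℕ) (σ : Equiv.Perm (Fin n)) : ℕ :=
  ∑ j : Fin n, if M ≤ (j : ℕ) ∧ isRec n σ j then 1 else 0

theorem recCount_insLast (n M : ℕ) (hM : M ≤ n) (r : Fin (n+1)) (τ : Equiv.Perm (Fin n)) :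
    recCount (n+1) M (insLast n (r, τ)) = recCount n M τ + if r = Fin.last n then 1 else 0 := by
  classical
  unfold recCount
  rw [Fin.sum_univ_castSucc]
  congr 1
  · refine Finset.sum_congr rfl fun j _ => ?_
    have : isRec (n+1) (insLast n (r, τ)) j.castSucc ↔ isRec n τ j := by
      unfold isRec
      rw [Fin.forall_fin_succ']
      have h0 : ¬ (Fin.last n < j.castSucc) := by simp [Fin.le_last]
      simp only [h0, false_imp_iff, and_true, insLast_castSucc, Fin.castSucc_lt_castSucc_iff,
        Fin.succAbove_lt_succAbove_iff]
    simp [this]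
  · have : isRec (n+1) (insLast n (r, τ)) (Fin.last n) ↔ r = Fin.last n := by
      unfold isRec
      rw [Fin.forall_fin_succ']
      simp only [insLast_last, insLast_castSucc, Fin.castSucc_lt_last, true_imp_iff, lt_irrefl,
        false_imp_iff, and_true]
      constructor
      · intro h
        by_contra hr
        have hr' : (r : ℕ) < n := by
          have := Fin.val_lt_last hr
          simpa using this
        have h1 := h (τ.symm ⟨r, hr'⟩)
        rw [Equiv.apply_symm_apply, Fin.succAbove_lt_iff_castSucc_lt] at h1
        simp [Fin.lt_def] at h1
      · rintro rfl i
        simp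
    simp [this, hM]

/-- Weighted sum of a function of the number of records. -/
noncomputable def recSum (n M : ℕ) (q : ℝ) (g : ℕ → ℝ) : ℝ :=
  ∑ σ : Equiv.Perm (Fin n), q ^ invCount n σ * g (recCount n M σ)

theorem recSum_succ (n M : ℕ) (hM : M ≤ n) (q : ℝ) (g : ℕ → ℝ) :
    recSum (n+1) M q g = q * (∑ i ∈ range n, q ^ i) * recSum n M q g
      + recSum n M q (fun k => g (k+1)) := by
  unfold recSum
  rw [← Equiv.sum_comp (Equiv.ofBijective _ (insLast_bij n)), Fintype.sum_prod_type,
    Fin.sum_univ_castSucc]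
  congr 1
  · have : q * (∑ i ∈ range n, q ^ i) = ∑ r : Fin n, q ^ (n - (r:ℕ)) := by
      rw [Fin.sum_univ_eq_sum_range (fun r => q ^ (n - r)) n, Finset.mul_sum,
        ← Finset.sum_range_reflect]
      refine Finset.sum_congr rfl fun i hi => ?_
      rw [Finset.mem_range] at hi
      rw [← pow_succ']
      congr 1; omega
    rw [this, Finset.sum_mul]
    refine Finset.sum_congr rfl fun r _ => ?_
    rw [Finset.mul_sum]
    refine Finset.sum_congr rfl fun τ _ => ?_
    have h0 : r.castSucc ≠ Fin.last n := (Fin.castSucc_lt_last r).ne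
    simp only [Equiv.ofBijective_apply, invCount_insLast, recCount_insLast n M hM, h0, if_false,
      add_zero, Fin.val_castSucc, pow_add]
    ring
  · refine Finset.sum_congr rfl fun τ _ => ?_
    simp [Equiv.ofBijective_apply, invCount_insLast, recCount_insLast n M hM]

theorem recSum_one (n M : ℕ) (q : ℝ) : recSum n M q (fun _ => 1) = mallowsZ n q := by
  simp [recSum, mallowsZ]

theorem mallowsZ_succ (n : ℕ) (q : ℝ) :
    mallowsZ (n+1) q = (∑ i ∈ range (n+1), q ^ i) * mallowsZ n q := by
  have := recSum_succ n 0 (Nat.zero_le _) q (fun _ => 1)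
  simp only [recSum_one] at this
  rw [this, Finset.sum_range_succ' , Finset.mul_sum]
  simp only [pow_succ', pow_zero]
  ring

theorem recSum_base (m : ℕ) (q : ℝ) (g : ℕ → ℝ) :
    recSum m m q g = g 0 * mallowsZ m q := by
  unfold recSum mallowsZ
  rw [Finset.mul_sum]
  refine Finset.sum_congr rfl fun τ _ => ?_
  have : recCount m m τ = 0 := by
    classical
    unfold recCount
    refine Finset.sum_eq_zero fun j _ => ?_
    rw [if_neg]
    have := j.2
    omega
  rw [this, mul_comm]

theorem mallowsZ_pos (n : ℕ) (q : ℝ) (hq : 0 < q) : 0 < mallowsZ n q := by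
  unfold mallowsZ
  exact Finset.sum_pos (fun _ _ => pow_pos hq _) Finset.univ_nonempty

theorem step_lim (q : ℝ) (hq : q ∈ Set.Ioo (0 : ℝ) 1) (t : ℕ) (g : ℕ → ℝ) (a b : ℝ)
    (ha : Tendsto (fun m : ℕ => recSum (m+t) m q g / mallowsZ (m+t) q) atTop (nhds a))
    (hb : Tendsto (fun m : ℕ => recSum (m+t) m q (fun k => g (k+1)) / mallowsZ (m+t) q) atTop
      (nhds b)) :
    Tendsto (fun m : ℕ => recSum (m+(t+1)) m q g / mallowsZ (m+(t+1)) q) atTop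
      (nhds (q * a + (1-q) * b)) := by
  obtain ⟨h0, h1⟩ := hq
  have hs : ∀ c, Tendsto (fun m : ℕ => ∑ i ∈ range (m + c), q ^ i) atTop (nhds (1-q)⁻¹) :=
    fun c => (tendsto_add_atTop_iff_nat (f := fun m : ℕ => ∑ i ∈ range m, q ^ i) c).2
      (hasSum_geometric_of_lt_one h0.le h1).tendsto_sum_nat
  have hne : (1-q)⁻¹ ≠ 0 := inv_ne_zero (by linarith)
  have key := (((hs t).const_mul q).mul ha |>.add hb).div (hs (t+1)) hne
  have e : (q * (1-q)⁻¹ * a + b) / (1-q)⁻¹ = q * a + (1-q) * b := by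
    have : 1 - q ≠ 0 := by linarith
    field_simp
  rw [e] at key
  refine key.congr fun m => ?_
  have hz := (mallowsZ_pos (m+t) q h0).ne'
  have hp : (∑ i ∈ range (m + (t+1)), q ^ i) ≠ 0 :=
    (Finset.sum_pos (fun _ _ => pow_pos h0 _) ⟨0, by simp⟩).ne'
  rw [Pi.div_apply]
  rw [show m + (t+1) = m + t + 1 by ring] at *
  rw [recSum_succ _ _ (by omega), mallowsZ_succ]
  field_simp

theorem lim_zero (q : ℝ) (hq : q ∈ Set.Ioo (0 : ℝ) 1) (t : ℕ) :
    Tendsto (fun m : ℕ => recSum (m+t) m q (fun k => if k = 0 then 1 else 0) / mallowsZ (m+t) q)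
      atTop (nhds (q ^ t)) := by
  induction t with
  | zero =>
    refine tendsto_const_nhds.congr fun m => ?_
    simp only [add_zero, recSum_base, if_true, one_mul, pow_zero]
    exact (div_self (mallowsZ_pos m q hq.1).ne').symm
  | succ t ih =>
    have := step_lim q hq t _ _ 0 ih (by simp [recSum])
    rw [pow_succ']
    simpa using this

theorem lim_one (q : ℝ) (hq : q ∈ Set.Ioo (0 : ℝ) 1) (t : ℕ) :
    Tendsto (fun m : ℕ => recSum (m+t) m q (fun k => if k = 1 then 1 else 0) / mallowsZ (m+t) q)
      atTop (nhds ((1-q) * q ^ (t-1) * t)) := by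
  induction t with
  | zero => simp [recSum_base]
  | succ t ih =>
    have := step_lim q hq t _ _ (q ^ t) ih (by simpa using lim_zero q hq t)
    convert this using 2
    rcases t with _ | t
    · simp
    · simp only [Nat.add_sub_cancel]
      push_cast
      ring

theorem mem_win_iff (n M : ℕ) (hM : 1 ≤ M) (hn : M ≤ n) (σ : Equiv.Perm (Fin n)) :
    σ ∈ winEvent n M ↔ recCount n M σ = 1 := by
  classical
  have hc : recCount n M σ = 1 ↔ ∃ j : Fin n, (M ≤ (j:ℕ) ∧ isRec n σ j) ∧
      ∀ j' : Fin n, M ≤ (j':ℕ) ∧ isRec n σ j' → j' = j := by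
    unfold recCount
    rw [← Finset.card_filter, Finset.card_eq_one]
    constructor
    · rintro ⟨j, hj⟩
      have h : ∀ x : Fin n, (M ≤ (x:ℕ) ∧ isRec n σ x) ↔ x = j := by
        intro x
        have := Finset.ext_iff.1 hj x
        simpa using this
      exact ⟨j, (h j).2 rfl, fun j' hj' => (h j').1 hj'⟩
    · rintro ⟨j, hj, hu⟩
      refine ⟨j, ?_⟩
      ext x
      simp only [Finset.mem_filter, Finset.mem_univ, true_and, Finset.mem_singleton]
      exact ⟨hu x, fun h => h ▸ hj⟩
  rw [hc]
  unfold winEvent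
  rw [if_neg (by omega)]
  simp only [Finset.mem_filter, Finset.mem_univ, true_and]
  have hne : (Finset.univ.filter (fun i : Fin n => (i : ℕ) < M)).Nonempty :=
    ⟨⟨0, by omega⟩, by simp; omega⟩
  constructor
  · rintro ⟨j, hj, htop, hsup⟩
    have hlt : ∀ i, i ≠ j → σ i < σ j := by
      intro i hij
      have h1 : σ i ≠ σ j := fun h => hij (σ.injective h)
      have h2 := (σ i).2
      rw [Fin.lt_def]
      have h3 : (σ i : ℕ) ≠ σ j := fun h => h1 (Fin.ext h)
      omega
    refine ⟨j, ⟨hj, fun i hi => hlt i hi.ne⟩, ?_⟩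
    rintro j' ⟨hj', hr⟩
    by_contra hne'
    rcases lt_or_gt_of_ne hne' with h | h
    · obtain ⟨i1, hi1, he⟩ := Finset.exists_mem_eq_sup _ hne (fun i => (σ i : ℕ))
      have h1 : (σ j' : ℕ) ≤ (Finset.univ.filter (fun i : Fin n => i < j)).sup
          (fun i => (σ i : ℕ)) :=
        Finset.le_sup (f := fun i => (σ i : ℕ)) (by simpa using h)
      rw [hsup, he] at h1
      simp only [Finset.mem_filter, Finset.mem_univ, true_and] at hi1
      have h2 := hr i1 (by rw [Fin.lt_def]; omega)
      rw [Fin.lt_def] at h2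
      omega
    · exact absurd (hr j h) (not_lt.2 (hlt j' hne').le)
  · rintro ⟨j, ⟨hj, hr⟩, hu⟩
    have hn0 : n - 1 < n := by omega
    let p : Fin n := σ.symm ⟨n-1, hn0⟩
    have hp : (σ p : ℕ) = n - 1 := by simp [p]
    have hlt : ∀ i, i ≠ p → σ i < σ p := by
      intro i hij
      have h2 := (σ i).2
      rw [Fin.lt_def]
      have h3 : (σ i : ℕ) ≠ σ p := fun h => hij (σ.injective (Fin.ext h))
      omega
    have hpM : M ≤ (p : ℕ) := by
      by_contra hlt'
      have h4 : p < j := by rw [Fin.lt_def]; omega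
      exact absurd (hr p h4) (not_lt.2 (hlt j h4.ne').le)
    have hpj : p = j := hu p ⟨hpM, fun i hi => hlt i hi.ne⟩
    refine ⟨j, hj, hpj ▸ hp, le_antisymm ?_ ?_⟩
    · have hne2 : (Finset.univ.filter (fun i : Fin n => i < j)).Nonempty :=
        ⟨⟨0, by omega⟩, by
          simp only [Finset.mem_filter, Finset.mem_univ, true_and, Fin.lt_def]; omega⟩
      obtain ⟨i0, hi0, he⟩ := Finset.exists_mem_eq_sup _ hne2 (fun i => (σ i : ℕ))
      have hmax : ∀ i, i < j → (σ i : ℕ) ≤ σ i0 := by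
        intro i hi
        rw [← he]
        exact Finset.le_sup (f := fun i => (σ i : ℕ)) (by simpa using hi)
      simp only [Finset.mem_filter, Finset.mem_univ, true_and] at hi0
      rw [he]
      refine Finset.le_sup (f := fun i => (σ i : ℕ)) ?_
      simp only [Finset.mem_filter, Finset.mem_univ, true_and]
      by_contra hge
      refine hi0.ne (hu i0 ⟨by omega, fun i hi => ?_⟩)
      exact lt_of_le_of_ne (Fin.le_def.2 (hmax i (hi.trans hi0))) fun h => hi.ne (σ.injective h)
    · refine Finset.sup_mono ?_
      intro i
      simp only [Finset.mem_filter, Finset.mem_univ, true_and, Fin.lt_def]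
      omega

theorem stmt_10 (q : ℝ) (hq : q ∈ Set.Ioo (0 : ℝ) 1) (L : ℕ) (hL : 1 ≤ L) :
    Tendsto (fun n : ℕ => succProb n (n - L) q) atTop
      (nhds ((1 - q) * q ^ (L - 1) * L)) := by
  rw [← tendsto_add_atTop_iff_nat L]
  refine (lim_one q hq L).congr' ?_
  filter_upwards [eventually_ge_atTop 1] with m hm
  rw [Nat.add_sub_cancel, succProb, mallowsProb, recSum]
  congr 1
  simp only [mul_ite, mul_one, mul_zero]
  rw [← Finset.sum_filter]
  refine Finset.sum_congr ?_ fun _ _ => rfl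
  ext σ
  simp [mem_win_iff (m+L) m hm (by omega)]
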